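/- The partial order 𝒫 is c.c.c.: for every uncountable set W ⊆ 𝒫 there exist distinct p, q ∈ W that are compatible, i.e., have a common lower bound in 𝒫. -/

import Mathlib

open Cardinal Set

/-- A condition `p = ⟨n_p, s_p, a_p, b_p, Z_p, ⟨c_p^z : z ∈ Z_p⟩⟩` of the partial
order `𝒫`. -/
structure PCond (θ : Cardinal.{0}) where
  /-- `n_p ∈ ω` -/
  n : ℕ
  /-- `s_p`, a finite subset of `θ` -/
  s : Set Ordinal.{0}
  /-- `a_p ⊆ n_p × s_p` -/
  a : Set (ℕ × Ordinal.{0})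
  /-- `b_p ⊆ n_p × s_p` -/
  b : Set (ℕ × Ordinal.{0})
  /-- `Z_p`, a finite set of subsets of `θ`, each of cardinality `≤ ℵ₁` -/
  Z : Set (Set Ordinal.{0})
  /-- `⟨c_p^z : z ∈ Z_p⟩` with `c_p^z ⊆ n_p` -/
  c : Set Ordinal.{0} → Set ℕ
  s_fin : s.Finite
  s_sub : s ⊆ Set.Iio θ.ord
  a_sub : a ⊆ Set.Iio n ×ˢ s
  b_sub : b ⊆ Set.Iio n ×ˢ s
  ab_disj : a ∩ b = ∅
  Z_fin : Z.Finite
  Z_sub : ∀ z ∈ Z, z ⊆ Set.Iio θ.ord ∧ #z ≤ Cardinal.aleph 1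
  c_sub : ∀ z ∈ Z, c z ⊆ Set.Iio n

/-- The ordering of `𝒫`:  `q ≤ p` iff conditions (1)–(5) hold. -/
def PLe (θ : Cardinal.{0}) (q p : PCond θ) : Prop :=
  (p.s ⊆ q.s ∧ p.n ≤ q.n ∧ p.Z ⊆ q.Z) ∧
  (q.a ∩ Set.Iio p.n ×ˢ p.s = p.a ∧ q.b ∩ Set.Iio p.n ×ˢ p.s = p.b) ∧
  (∀ z ∈ p.Z, q.c z ∩ Set.Iio p.n = p.c z) ∧
  (∀ ξ ∈ p.s, ∀ η ∈ p.s, ∀ l : ℕ, p.n ≤ l → l < q.n →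
    (l, ξ) ∈ q.a → (l, η) ∉ q.b) ∧
  (∀ z ∈ p.Z, ∀ ξ ∈ z ∩ p.s, ∀ l : ℕ, p.n ≤ l → l < q.n →
    ((l, ξ) ∈ q.a → l ∈ q.c z) ∧ ((l, ξ) ∈ q.b → l ∉ q.c z))

/-!
Two conditions with the same `n` are compatible as soon as they agree where both are defined: their
union, with `n` unchanged, is a common lower bound, because clauses (4) and (5) of the ordering only
constrain levels `l ≥ n` and so are vacuous. A condition is coded by `n` and finite relations
between `ω` and its finite domains `s` and `Z`. By the Δ-system lemma an uncountable family can be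
thinned so that the domains meet pairwise in a fixed finite root, and over a finite root only
countably many finite relations exist, so one more thinning makes all conditions agree there.
The outcome is uncountably many pairwise compatible conditions: the Knaster property.
-/

section Uncountable

variable {ι X Y : Type*} {W : Set ι}

/-- The family of sets `D p`, indexed by `p ∈ W`, is a Δ-system (sunflower) with root `R`. The
indices, not the sets, are required to be distinct, so repetitions of a set equal to `R` are
allowed. -/
def IsDeltaSystem (W : Set ι) (D : ι → Set X) (R : Set X) : Prop :=
  W.Pairwise fun p q => D p ∩ D q = R

theorem exists_uncountable_fiber_of_mapsTo {C : Set Y} (hW : ¬ W.Countable) (hC : C.Countable)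
    {f : ι → Y} (hf : MapsTo f W C) : ∃ y ∈ C, ¬ {p ∈ W | f p = y}.Countable := by
  by_contra! h
  refine hW ((hC.biUnion h).mono fun p hp => ?_)
  exact mem_biUnion (hf hp) ⟨hp, rfl⟩

theorem exists_maximal_pairwise_subset (W : Set ι) (r : ι → ι → Prop) :
    ∃ M, Maximal (fun M => M ⊆ W ∧ M.Pairwise r) M :=
  zorn_subset {M | M ⊆ W ∧ M.Pairwise r} fun c hc hchain =>
    ⟨⋃₀ c, ⟨sUnion_subset fun _ hM => (hc hM).1,
      (pairwise_sUnion hchain.directedOn).2 fun _ hM => (hc hM).2⟩, fun _ => subset_sUnion_of_mem⟩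

theorem exists_uncountable_pairwiseDisjoint {D : ι → Set X} (hW : ¬ W.Countable)
    (hD : ∀ p ∈ W, (D p).Countable) (hx : ∀ x, {p ∈ W | x ∈ D p}.Countable) :
    ∃ W' ⊆ W, ¬ W'.Countable ∧ W'.PairwiseDisjoint D := by
  obtain ⟨M, ⟨hMW, hMdisj⟩, hMmax⟩ := exists_maximal_pairwise_subset W (Function.onFun Disjoint D)
  refine ⟨M, hMW, fun hM => hW ?_, hMdisj⟩
  have hmeet : (⋃ x ∈ ⋃ p ∈ M, D p, {q ∈ W | x ∈ D q}).Countable :=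
    (hM.biUnion fun p hp => hD p (hMW hp)).biUnion fun x _ => hx x
  refine (hM.union hmeet).mono fun q hq => or_iff_not_imp_right.2 fun hqmeet => ?_
  have hqdisj : ∀ p ∈ M, Disjoint (D q) (D p) := fun p hp =>
    disjoint_left.2 fun x hxq hxp =>
      hqmeet (mem_biUnion (mem_biUnion hp hxp) ⟨hq, hxq⟩)
  exact hMmax ⟨insert_subset hq hMW, PairwiseDisjoint.insert hMdisj fun p hp _ => hqdisj p hp⟩
    (subset_insert q M) (mem_insert q M)

theorem exists_uncountable_isDeltaSystem_of_encard_eq {k : ℕ} {D : ι → Set X} (hW : ¬ W.Countable)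
    (hD : ∀ p ∈ W, (D p).encard = k) :
    ∃ R : Set X, R.Finite ∧ ∃ W' ⊆ W, ¬ W'.Countable ∧ IsDeltaSystem W' D R := by
  induction k generalizing W D with
  | zero =>
    refine ⟨∅, finite_empty, W, Subset.rfl, hW, fun p hp q _ _ => ?_⟩
    simp only [encard_eq_zero.1 (hD p hp), empty_inter]
  | succ k ih =>
    by_cases hx : ∀ x, {p ∈ W | x ∈ D p}.Countable
    · have hfin : ∀ p ∈ W, (D p).Finite := fun p hp => finite_of_encard_eq_coe (hD p hp)
      obtain ⟨W', hW'W, hW', hdisj⟩ :=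
        exists_uncountable_pairwiseDisjoint hW (fun p hp => (hfin p hp).countable) hx
      exact ⟨∅, finite_empty, W', hW'W, hW', hdisj.imp fun _ _ h => h.inter_eq⟩
    · obtain ⟨x, hx⟩ := not_forall.1 hx
      have hcard : ∀ p ∈ {p ∈ W | x ∈ D p}, (D p \ {x}).encard = k := fun p hp => by
        have hcard_succ : (D p \ {x}).encard + 1 = k + 1 := by
          rw [encard_sdiff_singleton_add_one hp.2, hD p hp.1, Nat.cast_add_one]
        exact ENat.add_left_injective_of_ne_top ENat.one_ne_top hcard_succ
      obtain ⟨R, hR, W', hW'W, hW', hroot⟩ := ih hx hcard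
      refine ⟨insert x R, hR.insert x, W', fun p hp => (hW'W hp).1, hW', fun p hp q hq hpq => ?_⟩
      have hx_mem : x ∈ D p ∩ D q := ⟨(hW'W hp).2, (hW'W hq).2⟩
      rw [← hroot hp hq hpq, ← sdiff_inter_distrib_right, insert_sdiff_singleton,
        insert_eq_of_mem hx_mem]

theorem exists_uncountable_isDeltaSystem {D : ι → Set X} (hW : ¬ W.Countable)
    (hD : ∀ p ∈ W, (D p).Finite) :
    ∃ R : Set X, R.Finite ∧ ∃ W' ⊆ W, ¬ W'.Countable ∧ IsDeltaSystem W' D R := by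
  obtain ⟨k, -, hk⟩ :=
    exists_uncountable_fiber_of_mapsTo hW countable_univ (mapsTo_univ (fun p => (D p).ncard) W)
  have hcard : ∀ p ∈ {p ∈ W | (D p).ncard = k}, (D p).encard = k := fun p hp => by
    rw [← (hD p hp.1).cast_ncard_eq, hp.2]
  obtain ⟨R, hR, W', hW'W, hW', hroot⟩ := exists_uncountable_isDeltaSystem_of_encard_eq hk hcard
  exact ⟨R, hR, W', fun p hp => (hW'W hp).1, hW', hroot⟩

theorem exists_uncountable_pairwise_agree [Countable Y] {D : ι → Set X} {G : ι → Set (Y × X)}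
    (hW : ¬ W.Countable) (hD : ∀ p ∈ W, (D p).Finite) (hG : ∀ p ∈ W, (G p).Finite) :
    ∃ W' ⊆ W, ¬ W'.Countable ∧
      W'.Pairwise fun p q => ∀ x ∈ D p ∩ D q, ∀ y, (y, x) ∈ G p ↔ (y, x) ∈ G q := by
  obtain ⟨R, hR, W', hW'W, hW', hroot⟩ := exists_uncountable_isDeltaSystem hW hD
  have hrel : {g : Set (Y × X) | g.Finite ∧ g ⊆ Set.univ ×ˢ R}.Countable :=
    countable_ofPred_finite_subset (countable_univ.prod hR.countable)
  obtain ⟨g, -, hg⟩ := exists_uncountable_fiber_of_mapsTo hW' hrel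
    (f := fun p => G p ∩ Set.univ ×ˢ R)
    fun p hp => ⟨(hG p (hW'W hp)).inter_of_left _, inter_subset_right⟩
  refine ⟨_, fun p hp => hW'W hp.1, hg, fun p hp q hq hpq x hx y => ?_⟩
  have hyx : (y, x) ∈ Set.univ ×ˢ R := ⟨trivial, hroot hp.1 hq.1 hpq ▸ hx⟩
  have hpq_eq : G p ∩ Set.univ ×ˢ R = G q ∩ Set.univ ×ˢ R := hp.2.trans hq.2.symm
  simpa only [mem_inter_iff, hyx, and_true] using Set.ext_iff.1 hpq_eq (y, x)

end Uncountable

namespace PCond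

variable {θ : Cardinal.{0}} {p q : PCond θ}

/-- The family `⟨c_p^z : z ∈ Z_p⟩` as a relation between levels and members of `Z_p`, the same
shape as `a_p` and `b_p`. The restriction to `Z_p` discards the values `c_p^z` for `z ∉ Z_p`, which
carry no information. -/
def cGraph (p : PCond θ) : Set (ℕ × Set Ordinal.{0}) :=
  {x | x.2 ∈ p.Z ∧ x.1 ∈ p.c x.2}

theorem finite_a (p : PCond θ) : p.a.Finite :=
  ((finite_Iio p.n).prod p.s_fin).subset p.a_sub

theorem finite_b (p : PCond θ) : p.b.Finite :=
  ((finite_Iio p.n).prod p.s_fin).subset p.b_sub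

theorem finite_cGraph (p : PCond θ) : p.cGraph.Finite :=
  ((finite_Iio p.n).prod p.Z_fin).subset fun _ hx => ⟨p.c_sub _ hx.1 hx.2, hx.1⟩

/-- Two conditions are coherent if they have the same `n` and agree on their common domains: this
is what makes their componentwise union a condition below both. -/
structure Coherent (p q : PCond θ) : Prop where
  n_eq : p.n = q.n
  mem_a_iff : ∀ ξ ∈ p.s ∩ q.s, ∀ l, (l, ξ) ∈ p.a ↔ (l, ξ) ∈ q.a
  mem_b_iff : ∀ ξ ∈ p.s ∩ q.s, ∀ l, (l, ξ) ∈ p.b ↔ (l, ξ) ∈ q.b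
  mem_cGraph_iff : ∀ z ∈ p.Z ∩ q.Z, ∀ l, (l, z) ∈ p.cGraph ↔ (l, z) ∈ q.cGraph

namespace Coherent

theorem symm (h : Coherent p q) : Coherent q p where
  n_eq := h.n_eq.symm
  mem_a_iff ξ hξ l := (h.mem_a_iff ξ hξ.symm l).symm
  mem_b_iff ξ hξ l := (h.mem_b_iff ξ hξ.symm l).symm
  mem_cGraph_iff z hz l := (h.mem_cGraph_iff z hz.symm l).symm

theorem disjoint_a_b (h : Coherent p q) : Disjoint p.a q.b :=
  disjoint_left.2 fun ⟨l, ξ⟩ ha hb =>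
    have hξ : ξ ∈ p.s ∩ q.s := ⟨(p.a_sub ha).2, (q.b_sub hb).2⟩
    disjoint_left.1 (disjoint_iff_inter_eq_empty.2 q.ab_disj) ((h.mem_a_iff ξ hξ l).1 ha) hb

/-- The componentwise union of two coherent conditions, the canonical witness that they are
compatible. Its `c` is the section of the union of the two `cGraph`s. -/
def amalgam (h : Coherent p q) : PCond θ where
  n := p.n
  s := p.s ∪ q.s
  a := p.a ∪ q.a
  b := p.b ∪ q.b
  Z := p.Z ∪ q.Z
  c z := {l | (l, z) ∈ p.cGraph ∪ q.cGraph}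
  s_fin := p.s_fin.union q.s_fin
  s_sub := union_subset p.s_sub q.s_sub
  a_sub := by
    rw [prod_union]
    exact union_subset_union p.a_sub (h.n_eq ▸ q.a_sub)
  b_sub := by
    rw [prod_union]
    exact union_subset_union p.b_sub (h.n_eq ▸ q.b_sub)
  ab_disj := by
    simp only [← disjoint_iff_inter_eq_empty, disjoint_union_left, disjoint_union_right]
    exact ⟨⟨disjoint_iff_inter_eq_empty.2 p.ab_disj, h.symm.disjoint_a_b⟩,
      h.disjoint_a_b, disjoint_iff_inter_eq_empty.2 q.ab_disj⟩
  Z_fin := p.Z_fin.union q.Z_fin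
  Z_sub z := Or.rec (p.Z_sub z) (q.Z_sub z)
  c_sub z _ := by
    rintro l (⟨hz, hl⟩ | ⟨hz, hl⟩)
    · exact p.c_sub z hz hl
    · exact h.n_eq ▸ q.c_sub z hz hl

theorem amalgam_comm (h : Coherent p q) : h.amalgam = h.symm.amalgam := by
  simp only [amalgam, union_comm, h.n_eq]

theorem amalgam_ple_left (h : Coherent p q) : PLe θ h.amalgam p := by
  refine ⟨⟨subset_union_left, le_rfl, subset_union_left⟩, ⟨?_, ?_⟩, fun z hz => ?_,
    fun _ _ _ _ _ hl hl' => absurd hl' hl.not_gt, fun _ _ _ _ _ hl hl' => absurd hl' hl.not_gt⟩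
  · refine Subset.antisymm ?_ fun _ ha => ⟨.inl ha, p.a_sub ha⟩
    rintro ⟨l, ξ⟩ ⟨ha | ha, -, hξ⟩
    · exact ha
    · exact (h.mem_a_iff ξ ⟨hξ, (q.a_sub ha).2⟩ l).2 ha
  · refine Subset.antisymm ?_ fun _ hb => ⟨.inl hb, p.b_sub hb⟩
    rintro ⟨l, ξ⟩ ⟨hb | hb, -, hξ⟩
    · exact hb
    · exact (h.mem_b_iff ξ ⟨hξ, (q.b_sub hb).2⟩ l).2 hb
  · refine Subset.antisymm ?_ fun _ hl => ⟨.inl ⟨hz, hl⟩, p.c_sub z hz hl⟩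
    rintro l ⟨hl | hl, -⟩
    · exact hl.2
    · exact ((h.mem_cGraph_iff z ⟨hz, hl.1⟩ l).2 hl).2

theorem amalgam_ple_right (h : Coherent p q) : PLe θ h.amalgam q :=
  h.amalgam_comm ▸ h.symm.amalgam_ple_left

end Coherent

theorem exists_uncountable_pairwise_coherent {W : Set (PCond θ)} (hW : ¬ W.Countable) :
    ∃ W' ⊆ W, ¬ W'.Countable ∧ W'.Pairwise Coherent := by
  obtain ⟨n, -, hn⟩ := exists_uncountable_fiber_of_mapsTo hW countable_univ (mapsTo_univ PCond.n W)
  obtain ⟨Wa, hWa_sub, hWa, ha⟩ := exists_uncountable_pairwise_agree hn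
    (fun p _ => p.s_fin) (fun p _ => p.finite_a)
  obtain ⟨Wb, hWb_sub, hWb, hb⟩ := exists_uncountable_pairwise_agree hWa
    (fun p _ => p.s_fin) (fun p _ => p.finite_b)
  obtain ⟨Wc, hWc_sub, hWc, hc⟩ := exists_uncountable_pairwise_agree hWb
    (fun p _ => p.Z_fin) (fun p _ => p.finite_cGraph)
  have hWca : Wc ⊆ Wa := hWc_sub.trans hWb_sub
  have hWcn : Wc ⊆ {p ∈ W | p.n = n} := hWca.trans hWa_sub
  exact ⟨Wc, hWcn.trans (sep_subset _ _), hWc, fun p hp q hq hpq =>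
    { n_eq := (hWcn hp).2.trans (hWcn hq).2.symm
      mem_a_iff := ha (hWca hp) (hWca hq) hpq
      mem_b_iff := hb (hWc_sub hp) (hWc_sub hq) hpq
      mem_cGraph_iff := hc hp hq hpq }⟩

end PCond

theorem statement11_general (θ : Cardinal.{0}) (W : Set (PCond θ)) (hW : ¬ W.Countable) :
    ∃ W' ⊆ W, ¬ W'.Countable ∧
      W'.Pairwise fun p q => ∃ r : PCond θ, PLe θ r p ∧ PLe θ r q := by
  obtain ⟨W', hW'W, hW', hcoh⟩ := PCond.exists_uncountable_pairwise_coherent hW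
  exact ⟨W', hW'W, hW', hcoh.imp fun _ _ h => ⟨h.amalgam, h.amalgam_ple_left, h.amalgam_ple_right⟩⟩

/-- the partial order `𝒫` is c.c.c.: every uncountable `W ⊆ 𝒫`
contains two distinct compatible conditions. -/
theorem statement11 (θ : Cardinal.{0}) (hθ : ℵ₀ < θ)
    (W : Set (PCond θ)) (hW : ¬ W.Countable) :
    ∃ p ∈ W, ∃ q ∈ W, p ≠ q ∧ ∃ r : PCond θ, PLe θ r p ∧ PLe θ r q := by
  obtain ⟨W', hW'W, hW', hcompat⟩ := statement11_general θ W hW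
  obtain ⟨p, hp, q, hq, hpq⟩ := not_subsingleton_iff.1 (mt Set.Subsingleton.countable hW')
  exact ⟨p, hW'W hp, q, hW'W hq, hpq, hcompat hp hq hpq⟩
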